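/- Let H be a complex separable Hilbert space and let A be a compact bounded linear operator on H with ‖A‖ < 1. Then the sequence (|A^n|^{1/n})_{n≥1} has at least one limit point in the operator-norm topology, and every operator-norm limit point of this sequence is a positive compact operator. -/

import Mathlib

/-!
Write `T n = |A ^ n| ^ (1 / n)`. The point is that, for every `ε > 0`, there is a finite-dimensional
subspace `G` with orthogonal projection `Q` such that `‖T n - Q (T n) Q‖ ≤ ε` for all large `n`
(`exists_eventually_norm_sub_compression_le`). Since `‖T n‖ ≤ 1` for `n ≥ 1`, the compressions
`Q (T n) Q` stay in a compact set of finite-rank operators. Hence `{T n}` is totally bounded, which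
gives a limit point, and every limit point is a norm limit of finite-rank operators, hence compact;
it is positive because the positive cone is closed.

To find `G`, choose a finite-dimensional subspace invariant under `A*` such that the compression
of `A*` to `Gᗮ` has no eigenvalue of modulus at least `δ`; it exists because otherwise one could
keep enlarging `G`, producing unit vectors whose images under the compact operator `A*` are
`δ`-separated (`exists_invariant`). With `P = 1 - Q`, the operator `P A*` is then compact with
spectral radius at most `δ`, and `(P A*)* = A P` satisfies `(A P) ^ n = A ^ n P` for `n ≥ 1`, so
`‖A ^ n P‖ ≤ (2 δ) ^ n` for large `n` (`exists_norm_pow_mul_le`). The Hölder–McCarthy inequality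
`‖T n x‖ ^ n ≤ ‖A ^ n x‖ ‖x‖ ^ (n - 1)` (`norm_absPow_apply_pow_le`) turns this into
`‖T n P‖ ≤ 2 δ`, and taking adjoints gives the same bound for `P (T n)`.
-/

open scoped NNReal InnerProductSpace
open Filter Topology

/-- The absolute value `|T| = (T*T)^{1/2}` of a bounded operator on a complex Hilbert space. -/
noncomputable def opAbs {H : Type*} [NormedAddCommGroup H] [InnerProductSpace ℂ H]
    [CompleteSpace H] (T : H →L[ℂ] H) : H →L[ℂ] H :=
  CFC.sqrt (ContinuousLinearMap.adjoint T * T)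

/-- `|T ^ n| ^ (1 / n)`, via the continuous functional calculus. -/
noncomputable def absPow {H : Type*} [NormedAddCommGroup H] [InnerProductSpace ℂ H]
    [CompleteSpace H] (T : H →L[ℂ] H) (n : ℕ) : H →L[ℂ] H :=
  CFC.nnrpow (opAbs (T ^ n)) ((n : ℝ≥0))⁻¹

section Aux

/-! ### Norm inequalities for powers of the absolute value -/

variable {H : Type*} [NormedAddCommGroup H] [InnerProductSpace ℂ H] [CompleteSpace H]

/-- Log-convexity of `k ↦ ‖B ^ k x‖` for self-adjoint `B`, in the form comparing `k = 1` with
`k = 0` and `k = n + 1`. -/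
lemma norm_pow_le_of_isSelfAdjoint {B : H →L[ℂ] H} (hB : IsSelfAdjoint B) (x : H) (n : ℕ) :
    ‖B x‖ ^ (n + 1) ≤ ‖(B ^ (n + 1)) x‖ * ‖x‖ ^ n := by
  have conv : ∀ k : ℕ, ‖(B ^ (k + 1)) x‖ ^ 2 ≤ ‖(B ^ k) x‖ * ‖(B ^ (k + 2)) x‖ := by
    intro k
    have h1 : ⟪(B ^ (k + 1)) x, (B ^ (k + 1)) x⟫_ℂ = ⟪(B ^ k) x, (B ^ (k + 2)) x⟫_ℂ := by
      have hs := hB.isSymmetric ((B ^ k) x) ((B ^ (k + 1)) x)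
      rw [pow_succ' B (k + 1), pow_succ' B k] at *
      exact hs
    have h2 : ‖⟪(B ^ (k + 1)) x, (B ^ (k + 1)) x⟫_ℂ‖ = ‖(B ^ (k + 1)) x‖ ^ 2 := by
      rw [inner_self_eq_norm_sq_to_K]; simp
    rw [← h2, h1]
    exact norm_inner_le_norm _ _
  -- the ratios `‖B ^ (k + 1) x‖ / ‖B ^ k x‖` are nondecreasing in `k`
  have ratio : ∀ k : ℕ, ‖B x‖ * ‖(B ^ k) x‖ ≤ ‖x‖ * ‖(B ^ (k + 1)) x‖ := by
    intro k
    induction k with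
    | zero => simp [mul_comm]
    | succ k ih =>
      rcases (norm_nonneg ((B ^ (k + 1)) x)).eq_or_lt with h0 | h0
      · rw [← h0, mul_zero]; positivity
      · refine le_of_mul_le_mul_right ?_ h0
        calc ‖B x‖ * ‖(B ^ (k + 1)) x‖ * ‖(B ^ (k + 1)) x‖
            = ‖B x‖ * ‖(B ^ (k + 1)) x‖ ^ 2 := by ring
          _ ≤ ‖B x‖ * (‖(B ^ k) x‖ * ‖(B ^ (k + 2)) x‖) := by gcongr; exact conv k
          _ = (‖B x‖ * ‖(B ^ k) x‖) * ‖(B ^ (k + 2)) x‖ := by ring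
          _ ≤ (‖x‖ * ‖(B ^ (k + 1)) x‖) * ‖(B ^ (k + 2)) x‖ := by gcongr
          _ = _ := by ring
  induction n with
  | zero => simp
  | succ n ih =>
    calc ‖B x‖ ^ (n + 1 + 1) = ‖B x‖ ^ (n + 1) * ‖B x‖ := pow_succ _ _
      _ ≤ (‖(B ^ (n + 1)) x‖ * ‖x‖ ^ n) * ‖B x‖ := by gcongr
      _ = (‖B x‖ * ‖(B ^ (n + 1)) x‖) * ‖x‖ ^ n := by ring
      _ ≤ (‖x‖ * ‖(B ^ (n + 1 + 1)) x‖) * ‖x‖ ^ n := mul_le_mul_of_nonneg_right (ratio (n + 1)) (by positivity)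
      _ = _ := by ring

lemma opAbs_nonneg (T : H →L[ℂ] H) : 0 ≤ opAbs T := CFC.sqrt_nonneg _

lemma absPow_nonneg (T : H →L[ℂ] H) (n : ℕ) : 0 ≤ absPow T n := CFC.nnrpow_nonneg

lemma norm_opAbs_apply (T : H →L[ℂ] H) (x : H) : ‖opAbs T x‖ = ‖T x‖ := by
  have hsq : opAbs T * opAbs T = ContinuousLinearMap.adjoint T * T :=
    CFC.sqrt_mul_sqrt_self _ (star_mul_self_nonneg T)
  have hsym := (opAbs_nonneg T).isSelfAdjoint.isSymmetric x (opAbs T x)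
  have h : ⟪opAbs T x, opAbs T x⟫_ℂ = ⟪T x, T x⟫_ℂ := by
    calc ⟪opAbs T x, opAbs T x⟫_ℂ = ⟪x, (opAbs T * opAbs T) x⟫_ℂ := hsym
      _ = _ := by
        rw [hsq]; exact ContinuousLinearMap.adjoint_inner_right T x (T x)
  rw [inner_self_eq_norm_sq_to_K, inner_self_eq_norm_sq_to_K] at h
  have h' : ‖opAbs T x‖ ^ 2 = ‖T x‖ ^ 2 := by exact_mod_cast h
  exact (sq_eq_sq₀ (norm_nonneg _) (norm_nonneg _)).1 h'

lemma absPow_pow (T : H →L[ℂ] H) {n : ℕ} (hn : n ≠ 0) : absPow T n ^ n = opAbs (T ^ n) := by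
  have hn' : (n : ℝ≥0) ≠ 0 := by exact_mod_cast hn
  have h := CFC.nnrpow_inv_nnrpow (opAbs (T ^ n)) hn' (opAbs_nonneg _)
  rw [CFC.nnrpow_eq_rpow (pos_iff_ne_zero.2 hn')] at h
  rw [← CFC.rpow_natCast _ n (absPow_nonneg T n)]
  exact_mod_cast h

/-- A Hölder–McCarthy inequality: in terms of `N = n + 1` it reads
`‖|T ^ N| ^ (1 / N) x‖ ^ N ≤ ‖T ^ N x‖ ‖x‖ ^ (N - 1)`. -/
lemma norm_absPow_apply_pow_le (T : H →L[ℂ] H) (n : ℕ) (x : H) :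
    ‖absPow T (n + 1) x‖ ^ (n + 1) ≤ ‖(T ^ (n + 1)) x‖ * ‖x‖ ^ n := by
  have h := norm_pow_le_of_isSelfAdjoint (absPow_nonneg T (n + 1)).isSelfAdjoint x n
  rwa [absPow_pow T n.succ_ne_zero, norm_opAbs_apply] at h

lemma norm_absPow_mul_le (T P : H →L[ℂ] H) (hP : ‖P‖ ≤ 1) {n : ℕ} (hn : n ≠ 0) {c : ℝ}
    (hc : 0 ≤ c) (h : ‖T ^ n * P‖ ≤ c ^ n) : ‖absPow T n * P‖ ≤ c := by
  obtain ⟨m, rfl⟩ := Nat.exists_eq_succ_of_ne_zero hn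
  refine ContinuousLinearMap.opNorm_le_bound _ hc fun x => ?_
  refine le_of_pow_le_pow_left₀ (Nat.succ_ne_zero m) (by positivity) ?_
  have hPx : ‖P x‖ ≤ ‖x‖ := by simpa using P.le_of_opNorm_le hP x
  calc ‖absPow T (m + 1) (P x)‖ ^ (m + 1)
      ≤ ‖(T ^ (m + 1) * P) x‖ * ‖P x‖ ^ m := norm_absPow_apply_pow_le T m (P x)
    _ ≤ (c ^ (m + 1) * ‖x‖) * ‖x‖ ^ m := by
        gcongr
        exact ContinuousLinearMap.le_of_opNorm_le _ h x
    _ = (c * ‖x‖) ^ (m + 1) := by ring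

/-! ### Decay of powers of a compact operator off a finite-dimensional subspace -/

/-- Schauder's theorem for Hilbert space operators. -/
lemma isCompactOperator_adjoint {A : H →L[ℂ] H} (hA : IsCompactOperator A) :
    IsCompactOperator (ContinuousLinearMap.adjoint A) := by
  set C := ContinuousLinearMap.adjoint A
  have hAC : IsCompactOperator (A * C) := hA.comp_clm C
  -- `‖A* z‖² = ⟪A A* z, z⟫`
  have key : ∀ z : H, ‖C z‖ ^ 2 ≤ ‖(A * C) z‖ * ‖z‖ := by
    intro z
    have h : ⟪(A * C) z, z⟫_ℂ = ⟪C z, C z⟫_ℂ :=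
      (ContinuousLinearMap.adjoint_inner_right A (C z) z).symm
    have h2 : ‖⟪C z, C z⟫_ℂ‖ = ‖C z‖ ^ 2 := by
      rw [inner_self_eq_norm_sq_to_K]; simp
    rw [← h2, ← h]
    exact norm_inner_le_norm _ _
  refine (isCompactOperator_iff_isCompact_closure_image_ball (C : H →ₗ[ℂ] H) one_pos).2 ?_
  have htb : TotallyBounded ((A * C) '' Metric.ball 0 1) :=
    (IsCompactOperator.isCompact_closure_image_ball (f := ((A * C : H →L[ℂ] H) : H →ₗ[ℂ] H))
      hAC 1).totallyBounded.subset subset_closure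
  refine TotallyBounded.isCompact_of_isClosed (TotallyBounded.closure ?_) isClosed_closure
  refine Metric.totallyBounded_iff.2 fun ε hε => ?_
  obtain ⟨u, hus, huf, hcov⟩ := Set.exists_subset_image_finite_and.1 (totallyBounded_iff_subset.1
    htb _ (Metric.dist_mem_uniformity (show 0 < ε ^ 2 / 2 by positivity)))
  refine ⟨C '' u, huf.image _, ?_⟩
  rintro _ ⟨x, hx, rfl⟩
  have h1 := hcov ⟨x, hx, rfl⟩
  simp only [Set.mem_iUnion, Set.mem_image, exists_prop, exists_exists_and_eq_and,
    Set.mem_ofPred_eq] at h1 ⊢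
  obtain ⟨y, hy, hd⟩ := h1
  refine ⟨y, hy, ?_⟩
  have hxn : ‖x‖ < 1 := by simpa using hx
  have hyn : ‖y‖ < 1 := by simpa using hus hy
  have hz : ‖x - y‖ ≤ 2 := (norm_sub_le x y).trans (by linarith)
  change dist (C x) (C y) < ε
  rw [dist_eq_norm, ← map_sub] at hd ⊢
  refine lt_of_pow_lt_pow_left₀ 2 hε.le ?_
  calc ‖C (x - y)‖ ^ 2 ≤ ‖(A * C) (x - y)‖ * ‖x - y‖ := key _
    _ ≤ ‖(A * C) (x - y)‖ * 2 := by gcongr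
    _ < ε ^ 2 / 2 * 2 := by gcongr
    _ = ε ^ 2 := by ring

/-- If every finite-dimensional `C`-invariant subspace `G` can be enlarged by an eigenvector modulo
`G` with eigenvalue of modulus at least `ε`, then iterating from `G = 0` yields unit vectors whose
images under `C` are `ε`-separated. -/
lemma exists_seq_separated {C : H →L[ℂ] H} {ε : ℝ}
    (hext : ∀ G : Submodule ℂ H, FiniteDimensional ℂ G → (∀ g ∈ G, C g ∈ G) →
      ∃ (e : H) (μ : ℂ), ‖e‖ = 1 ∧ e ∈ Gᗮ ∧ ε ≤ ‖μ‖ ∧ C e - μ • e ∈ G) :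
    ∃ e : ℕ → H, (∀ n, ‖e n‖ = 1) ∧ ∀ m n, m < n → ε ≤ ‖C (e n) - C (e m)‖ := by
  let S := {G : Submodule ℂ H // FiniteDimensional ℂ G ∧ ∀ g ∈ G, C g ∈ G}
  choose e μ he heG hμ hCe using fun G : S => hext G.1 G.2.1 G.2.2
  let next : S → S := fun G => ⟨G.1 ⊔ Submodule.span ℂ {e G}, by
    have := G.2.1
    refine ⟨inferInstance, fun g hg => ?_⟩
    obtain ⟨a, ha, b, hb, rfl⟩ := Submodule.mem_sup.1 hg
    obtain ⟨c, rfl⟩ := Submodule.mem_span_singleton.1 hb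
    rw [map_add, map_smul]
    refine add_mem (Submodule.mem_sup_left (G.2.2 a ha)) (Submodule.smul_mem _ _ ?_)
    rw [← sub_add_cancel (C (e G)) (μ G • e G)]
    exact add_mem (Submodule.mem_sup_left (hCe G))
      (Submodule.smul_mem _ _ (Submodule.mem_sup_right (Submodule.mem_span_singleton_self _)))⟩
  let G : ℕ → S := fun n => next^[n] ⟨⊥, inferInstance, by simp⟩
  have hG : ∀ n, (G (n + 1)).1 = (G n).1 ⊔ Submodule.span ℂ {e (G n)} := fun n => by
    simp only [G, Function.iterate_succ_apply', next]
  have hmono : Monotone fun n => (G n).1 :=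
    monotone_nat_of_le_succ fun n => by rw [hG]; exact le_sup_left
  refine ⟨fun n => e (G n), fun n => he _, fun m n hmn => ?_⟩
  have hem : e (G m) ∈ (G n).1 := hmono (Nat.succ_le_of_lt hmn) (by
    simp only [Nat.succ_eq_add_one]
    rw [hG]
    exact Submodule.mem_sup_right (Submodule.mem_span_singleton_self _))
  -- Modulo `G n`, the difference is `μ • e n`, and `e n` is orthogonal to `G n`.
  have h1 : C (e (G n)) - C (e (G m)) - μ (G n) • e (G n) ∈ (G n).1 := by
    have := sub_mem (hCe (G n)) ((G n).2.2 _ hem)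
    convert this using 1
    abel
  have h2 : ⟪e (G n), C (e (G n)) - C (e (G m))⟫_ℂ = μ (G n) := by
    have h3 := (Submodule.mem_orthogonal' _ _).1 (heG (G n)) _ h1
    rw [inner_sub_right, inner_smul_right, inner_self_eq_norm_sq_to_K, he,
      RCLike.ofReal_one, one_pow, mul_one] at h3
    exact sub_eq_zero.1 h3
  calc ε ≤ ‖μ (G n)‖ := hμ _
    _ ≤ ‖e (G n)‖ * ‖C (e (G n)) - C (e (G m))‖ := by rw [← h2]; exact norm_inner_le_norm _ _
    _ = _ := by rw [he, one_mul]

/-- A finite-dimensional substitute for the Riesz spectral subspace: an invariant `G` such that the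
compression of `C` to `Gᗮ` has no eigenvalue of modulus at least `ε`. -/
lemma exists_invariant {C : H →L[ℂ] H} (hC : IsCompactOperator C) {ε : ℝ} (hε : 0 < ε) :
    ∃ G : Submodule ℂ H, FiniteDimensional ℂ G ∧ (∀ g ∈ G, C g ∈ G) ∧
      ∀ (e : H) (μ : ℂ), e ∈ Gᗮ → ε ≤ ‖μ‖ → C e - μ • e ∈ G → e = 0 := by
  by_contra! hcon
  obtain ⟨e, he, hsep⟩ := exists_seq_separated (C := C) (ε := ε) (by
    intro G hG hCG
    obtain ⟨e, μ, heG, hμ, hmem, hne⟩ := hcon G hG hCG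
    have hne' : ‖e‖ ≠ 0 := norm_ne_zero_iff.2 hne
    refine ⟨((‖e‖⁻¹ : ℝ) : ℂ) • e, μ, ?_, Submodule.smul_mem _ _ heG, hμ, ?_⟩
    · rw [norm_smul]; simp [hne']
    · rw [map_smul, smul_comm, ← smul_sub]
      exact Submodule.smul_mem _ _ hmem)
  obtain ⟨K, hK, hsub⟩ := IsCompactOperator.image_closedBall_subset_compact
    (f := (C : H →ₗ[ℂ] H)) hC 1
  obtain ⟨a, -, φ, hφ, hlim⟩ := hK.tendsto_subseq (x := fun n => C (e n))
    fun n => hsub ⟨e n, by simp [he], rfl⟩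
  obtain ⟨N, hN⟩ := Metric.cauchySeq_iff'.1 hlim.cauchySeq ε hε
  have h1 := hN (N + 1) (Nat.le_succ N)
  rw [dist_eq_norm] at h1
  exact absurd h1 (not_lt.2 (hsep _ _ (hφ (Nat.lt_succ_self N))))

/-- By the Fredholm alternative the nonzero spectrum of `S` consists of eigenvalues, so its spectral
radius is at most `ε`, and Gelfand's formula applies. -/
lemma eventually_norm_pow_le_of_eigenvalues {S : H →L[ℂ] H} (hS : IsCompactOperator S) {ε : ℝ} (hε : 0 < ε)
    (h : ∀ (e : H) (μ : ℂ), ε ≤ ‖μ‖ → S e = μ • e → e = 0) :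
    ∀ᶠ n : ℕ in atTop, ‖S ^ n‖ ≤ (2 * ε) ^ n := by
  have hrad : spectralRadius ℂ S ≤ ENNReal.ofReal ε := by
    refine iSup₂_le fun μ hμ => ?_
    by_contra! hlt
    have hle : ε ≤ ‖μ‖ := by
      rw [← enorm_eq_nnnorm, ← ofReal_norm] at hlt
      exact (ENNReal.ofReal_lt_ofReal_iff_of_nonneg hε.le).1 hlt |>.le
    have hμ0 : μ ≠ 0 := norm_pos_iff.1 (hε.trans_le hle)
    obtain ⟨v, hv⟩ := ((hS.hasEigenvalue_iff_mem_spectrum hμ0).2 hμ).exists_hasEigenvector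
    exact hv.2 (h v μ hle hv.apply_eq_smul)
  have hlt : spectralRadius ℂ S < ENNReal.ofReal (2 * ε) :=
    hrad.trans_lt ((ENNReal.ofReal_lt_ofReal_iff (by positivity)).2 (by linarith))
  filter_upwards [(spectrum.pow_norm_pow_one_div_tendsto_nhds_spectralRadius S).eventually_lt_const
    hlt, eventually_ne_atTop 0] with n hn hn0
  have h1 := ((ENNReal.ofReal_lt_ofReal_iff (by positivity)).1 hn).le
  calc ‖S ^ n‖ = (‖S ^ n‖ ^ (1 / n : ℝ)) ^ n := by
        rw [one_div, Real.rpow_inv_natCast_pow (norm_nonneg _) hn0]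
    _ ≤ _ := by gcongr

/-- Outside a finite-dimensional subspace, the powers of a compact operator decay like those of an
arbitrarily small number. -/
lemma exists_norm_pow_mul_le {A : H →L[ℂ] H} (hA : IsCompactOperator A) {ε : ℝ}
    (hε : 0 < ε) : ∃ G : Submodule ℂ H, ∃ _ : FiniteDimensional ℂ G,
      ∀ᶠ n : ℕ in atTop, ‖A ^ n * (1 - G.starProjection)‖ ≤ (2 * ε) ^ n := by
  set C := ContinuousLinearMap.adjoint A with hCdef
  have hC : IsCompactOperator C := isCompactOperator_adjoint hA
  obtain ⟨G, hG, hinv, hmax⟩ := exists_invariant hC hε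
  refine ⟨G, hG, ?_⟩
  set P : H →L[ℂ] H := 1 - G.starProjection with hP
  have hPorth : P = Gᗮ.starProjection := G.starProjection_orthogonal'.symm
  have hPsa : star P = P := by rw [hPorth]; exact isSelfAdjoint_starProjection Gᗮ
  have hS : IsCompactOperator (P * C) := hC.clm_comp P
  have hev := eventually_norm_pow_le_of_eigenvalues hS hε (by
    intro e μ hμ he
    have hμ0 : μ ≠ 0 := norm_pos_iff.1 (hε.trans_le hμ)
    refine hmax e μ ?_ hμ ?_
    · have : μ⁻¹ • (P * C) e ∈ Gᗮ := Submodule.smul_mem _ _ (by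
        rw [hPorth]; exact Gᗮ.starProjection_apply_mem _)
      rwa [he, inv_smul_smul₀ hμ0] at this
    · rw [← he]
      have : C e - (P * C) e = G.starProjection (C e) := by simp [hP]
      rw [this]
      exact G.starProjection_apply_mem _)
  -- `Gᗮ` is invariant under `A` because `G` is invariant under its adjoint
  have hPAP : P * (A * P) = A * P := by
    ext x
    have hx : A (P x) ∈ Gᗮ := by
      rw [Submodule.mem_orthogonal]
      intro g hg
      rw [← ContinuousLinearMap.adjoint_inner_left]
      refine (Submodule.mem_orthogonal _ _).1 ?_ _ (hinv g hg)
      rw [hPorth]; exact Gᗮ.starProjection_apply_mem _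
    change P (A (P x)) = A (P x)
    rw [hPorth] at hx ⊢
    exact Submodule.starProjection_eq_self_iff.2 hx
  have hpow : ∀ n : ℕ, (A * P) ^ (n + 1) = A ^ (n + 1) * P := by
    intro n
    induction n with
    | zero => simp
    | succ n ih => rw [pow_succ, ih, mul_assoc, hPAP, ← mul_assoc, ← pow_succ]
  have hstar : star (P * C) = A * P := by
    rw [star_mul, hPsa, hCdef, ← ContinuousLinearMap.star_eq_adjoint, star_star]
  filter_upwards [hev, eventually_ne_atTop 0] with n hn hn0
  obtain ⟨m, rfl⟩ := Nat.exists_eq_succ_of_ne_zero hn0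
  rw [Nat.succ_eq_add_one, ← hpow, ← hstar, ← star_pow, norm_star]
  exact hn

/-! ### Approximation by finite-rank compressions -/

/-- Up to `ε`, eventually all `|A ^ n| ^ (1 / n)` are supported on one and the same
finite-dimensional subspace. -/
lemma exists_eventually_norm_sub_compression_le {A : H →L[ℂ] H} (hA : IsCompactOperator A) {ε : ℝ}
    (hε : 0 < ε) : ∃ G : Submodule ℂ H, ∃ _ : FiniteDimensional ℂ G,
      ∀ᶠ n : ℕ in atTop,
        ‖absPow A n - G.starProjection * absPow A n * G.starProjection‖ ≤ ε := by
  obtain ⟨G, hG, hev⟩ := exists_norm_pow_mul_le hA (ε := ε / 4) (by positivity)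
  refine ⟨G, hG, ?_⟩
  filter_upwards [hev, eventually_ne_atTop 0] with n hn hn0
  have hQ : ‖G.starProjection‖ ≤ 1 := G.starProjection_norm_le
  have hP : ‖1 - G.starProjection‖ ≤ 1 := by
    rw [← G.starProjection_orthogonal']; exact Gᗮ.starProjection_norm_le
  have h1 := norm_absPow_mul_le A _ hP hn0 (by positivity) hn
  have hT : star (absPow A n) = absPow A n := (absPow_nonneg A n).isSelfAdjoint
  have hQs : star G.starProjection = G.starProjection := isSelfAdjoint_starProjection G
  set T := absPow A n
  set Q := G.starProjection
  have h2 : ‖(1 - Q) * T‖ ≤ 2 * (ε / 4) := by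
    rwa [← norm_star, star_mul, star_sub, star_one, hT, hQs]
  calc ‖T - Q * T * Q‖ = ‖(1 - Q) * T + Q * (T * (1 - Q))‖ := by congr 1; noncomm_ring
    _ ≤ ‖(1 - Q) * T‖ + ‖Q‖ * ‖T * (1 - Q)‖ :=
        (norm_add_le _ _).trans (by gcongr; exact norm_mul_le _ _)
    _ ≤ 2 * (ε / 4) + 1 * (2 * (ε / 4)) := by gcongr
    _ = ε := by ring

lemma norm_absPow_le {A : H →L[ℂ] H} (hA : ‖A‖ ≤ 1) {n : ℕ} (hn : n ≠ 0) : ‖absPow A n‖ ≤ 1 := by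
  have h : ‖A ^ n‖ ≤ 1 := (norm_pow_le' A (Nat.pos_of_ne_zero hn)).trans
    (pow_le_one₀ (norm_nonneg _) hA)
  simpa using norm_absPow_mul_le A 1 ContinuousLinearMap.norm_id_le hn zero_le_one (by simpa using h)

lemma isCompact_compressions (G : Submodule ℂ H) [FiniteDimensional ℂ G] :
    ∃ K : Set (H →L[ℂ] H), IsCompact K ∧
      ∀ T : H →L[ℂ] H, ‖T‖ ≤ 1 → G.starProjection * T * G.starProjection ∈ K := by
  let Φ : (G →L[ℂ] G) → (H →L[ℂ] H) := fun X =>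
    G.subtypeL ∘L (X ∘L G.orthogonalProjectionOnto)
  have hΦ : Continuous Φ := by fun_prop
  have : ProperSpace (G →L[ℂ] G) := FiniteDimensional.proper ℂ (G →L[ℂ] G)
  refine ⟨Φ '' Metric.closedBall 0 1, (isCompact_closedBall _ _).image hΦ, fun T hT => ?_⟩
  refine ⟨G.orthogonalProjectionOnto ∘L (T ∘L G.subtypeL), ?_, ?_⟩
  · refine (mem_closedBall_zero_iff (E := G →L[ℂ] G)).2 ?_
    calc _ ≤ ‖G.orthogonalProjectionOnto‖ * (‖T‖ * ‖G.subtypeL‖) :=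
          (ContinuousLinearMap.opNorm_comp_le _ _).trans
            (by gcongr; exact ContinuousLinearMap.opNorm_comp_le _ _)
      _ ≤ 1 * (1 * 1) := by
          gcongr
          · exact G.orthogonalProjectionOnto_norm_le
          · exact G.norm_subtypeL_le
      _ = 1 := by norm_num
  · rfl

lemma isCompactOperator_compression (G : Submodule ℂ H) [FiniteDimensional ℂ G] (T : H →L[ℂ] H) :
    IsCompactOperator (G.starProjection * T * G.starProjection) := by
  have h : IsCompactOperator G.subtypeL :=
    isCompactOperator_of_locallyCompactSpace_rng _
  exact h.comp_clm (G.orthogonalProjectionOnto ∘L (T ∘L G.starProjection))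

lemma totallyBounded_absPow {A : H →L[ℂ] H} (hA : IsCompactOperator A) (hn : ‖A‖ ≤ 1) :
    TotallyBounded (Set.range (absPow A)) := by
  refine Metric.totallyBounded_iff.2 fun ε hε => ?_
  obtain ⟨G, hG, hev⟩ := exists_eventually_norm_sub_compression_le hA (half_pos hε)
  obtain ⟨N, hN⟩ := eventually_atTop.1 (hev.and (eventually_ne_atTop 0))
  obtain ⟨K, hK, hmem⟩ := isCompact_compressions G
  obtain ⟨t, htf, htc⟩ := Metric.totallyBounded_iff.1 hK.totallyBounded _ (half_pos hε)
  refine ⟨t ∪ absPow A '' Set.Iio N, htf.union ((Set.finite_Iio N).image _), ?_⟩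
  rintro _ ⟨n, rfl⟩
  simp only [Set.mem_iUnion]
  rcases lt_or_ge n N with h | h
  · exact ⟨_, Or.inr ⟨n, h, rfl⟩, Metric.mem_ball_self hε⟩
  · obtain ⟨h1, h0⟩ := hN n h
    have h2 := htc (hmem _ (norm_absPow_le hn h0))
    simp only [Set.mem_iUnion] at h2
    obtain ⟨y, hy, hd⟩ := h2
    refine ⟨y, Or.inl hy, ?_⟩
    rw [← dist_eq_norm] at h1
    rw [Metric.mem_ball] at hd ⊢
    linarith [dist_triangle (absPow A n) (G.starProjection * absPow A n * G.starProjection) y]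

lemma isCompactOperator_of_tendsto_absPow {A B : H →L[ℂ] H} (hA : IsCompactOperator A)
    {φ : ℕ → ℕ} (hφ : StrictMono φ) (hB : Tendsto (fun k => absPow A (φ k)) atTop (𝓝 B)) :
    IsCompactOperator B := by
  have hcl : IsClosed {T : H →L[ℂ] H | IsCompactOperator T} :=
    isClosed_setOfPred_isCompactOperator
  have : B ∈ closure {T : H →L[ℂ] H | IsCompactOperator T} := by
    refine Metric.mem_closure_iff.2 fun ε hε => ?_
    obtain ⟨G, hG, hev⟩ := exists_eventually_norm_sub_compression_le hA (half_pos hε)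
    obtain ⟨k, h1, h2⟩ := ((hφ.tendsto_atTop.eventually hev).and
      (Metric.tendsto_nhds.1 hB _ (half_pos hε))).exists
    refine ⟨_, isCompactOperator_compression G (absPow A (φ k)), ?_⟩
    rw [← dist_eq_norm] at h1
    rw [dist_comm] at h2
    linarith [dist_triangle B (absPow A (φ k))
      (G.starProjection * absPow A (φ k) * G.starProjection)]
  rwa [hcl.closure_eq] at this

end Aux

/-- For a compact operator `A` with `‖A‖ < 1`, the sequence `(|A^n|^{1/n})` has at least one
operator-norm limit point, and every such limit point is a positive compact operator. -/
theorem abspow_limit_points_nonempty_positive_compact {H : Type*} [NormedAddCommGroup H]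
    [InnerProductSpace ℂ H] [CompleteSpace H] [TopologicalSpace.SeparableSpace H]
    (A : H →L[ℂ] H) (hA : IsCompactOperator (⇑A)) (hnorm : ‖A‖ < 1) :
    (∃ B : H →L[ℂ] H, ∃ φ : ℕ → ℕ, StrictMono φ ∧
        Tendsto (fun k : ℕ => absPow A (φ k)) atTop (𝓝 B)) ∧
    (∀ B : H →L[ℂ] H,
      (∃ φ : ℕ → ℕ, StrictMono φ ∧ Tendsto (fun k : ℕ => absPow A (φ k)) atTop (𝓝 B)) →
      B.IsPositive ∧ IsCompactOperator (⇑B)) := by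
  constructor
  · have hK : IsCompact (closure (Set.range (absPow A))) :=
      (totallyBounded_absPow hA hnorm.le).closure.isCompact_of_isClosed isClosed_closure
    obtain ⟨B, -, φ, hφ, hB⟩ := hK.tendsto_subseq (x := absPow A)
      fun n => subset_closure ⟨n, rfl⟩
    exact ⟨B, φ, hφ, hB⟩
  · rintro B ⟨φ, hφ, hB⟩
    refine ⟨?_, isCompactOperator_of_tendsto_absPow hA hφ hB⟩
    rw [← ContinuousLinearMap.nonneg_iff_isPositive]
    exact ge_of_tendsto' hB fun k => absPow_nonneg A _
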